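/- There is a universal constant c > 0 such that the following holds. Let G be the ℓ×ℓ grid, let δ ≥ 1 and d ≥ 1 be integers, and let M be a set of demand pairs, with all sources distinct and all destinations distinct, such that every source s of M lies at distance at most δ from the boundary Γ(G) and every destination t of M satisfies d(t,t̃) < 2d, where for a vertex v, ṽ denotes a fixed vertex of Γ(G) at minimum distance from v. Let M̂ = {(s̃,t̃) : (s,t) ∈ M}. Then OPT(G,M̂) ≥ c·OPT(G,M)/(d+δ). -/

import Mathlib

open Finset

abbrev Vtx := ℕ × ℕ
abbrev DPair := Vtx × Vtx

/-- The grid graph on rows `r₁..r₂` and columns `c₁..c₂` (vertices outside are isolated). -/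
def rectGrid (r₁ r₂ c₁ c₂ : ℕ) : SimpleGraph Vtx :=
  SimpleGraph.fromRel (fun u v =>
    r₁ ≤ u.1 ∧ u.1 ≤ r₂ ∧ c₁ ≤ u.2 ∧ u.2 ≤ c₂ ∧
    r₁ ≤ v.1 ∧ v.1 ≤ r₂ ∧ c₁ ≤ v.2 ∧ v.2 ≤ c₂ ∧
    ((u.1 = v.1 ∧ u.2 + 1 = v.2) ∨ (u.2 = v.2 ∧ u.1 + 1 = v.1)))

/-- The ℓ×ℓ grid graph. -/
def gridG (ℓ : ℕ) : SimpleGraph Vtx := rectGrid 1 ℓ 1 ℓ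

/-- The demand pairs of `M` can be simultaneously routed via node-disjoint paths in `G`. -/
def NodeDisjointRoutable {V : Type*} (G : SimpleGraph V) (M : Finset (V × V)) : Prop :=
  ∃ P : ∀ m : {m // m ∈ M}, G.Walk m.val.1 m.val.2,
    (∀ m, (P m).IsPath) ∧
    ∀ m m' : {m // m ∈ M}, m ≠ m' → ∀ x, x ∈ (P m).support → x ∉ (P m').support

def OnTopRow (ℓ : ℕ) (v : Vtx) : Prop := v.1 = 1 ∧ 1 ≤ v.2 ∧ v.2 ≤ ℓ

def OnBoundary (ℓ : ℕ) (v : Vtx) : Prop :=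
  1 ≤ v.1 ∧ v.1 ≤ ℓ ∧ 1 ≤ v.2 ∧ v.2 ≤ ℓ ∧ (v.1 = 1 ∨ v.1 = ℓ ∨ v.2 = 1 ∨ v.2 = ℓ)

def DistinctSources (M : Finset DPair) : Prop := ∀ m ∈ M, ∀ m' ∈ M, m.1 = m'.1 → m = m'
def DistinctDests (M : Finset DPair) : Prop := ∀ m ∈ M, ∀ m' ∈ M, m.2 = m'.2 → m = m'

noncomputable def lg (n : ℕ) : ℝ := Real.logb 2 n

def IsIntervalIn (W : ℕ) (I : Finset ℕ) : Prop :=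
  ∃ a b : ℕ, 1 ≤ a ∧ a ≤ b ∧ b ≤ W ∧ I = Finset.Icc a b

def IntSeparated (d : ℕ) (I J : Finset ℕ) : Prop :=
  ∀ i ∈ I, ∀ j ∈ J, (d : ℤ) < |(i : ℤ) - (j : ℤ)|

def IsCanonicalIntervals (W d : ℕ) (Is : Finset (Finset ℕ)) : Prop :=
  (∀ I ∈ Is, IsIntervalIn W I ∧ I.card = d) ∧
    ∀ I ∈ Is, ∀ J ∈ Is, I ≠ J → IntSeparated d I J

abbrev SquareSpec := Finset ℕ × Finset ℕ

def memSquare (v : Vtx) (Q : SquareSpec) : Prop := v.1 ∈ Q.1 ∧ v.2 ∈ Q.2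

instance (v : Vtx) (Q : SquareSpec) : Decidable (memSquare v Q) := by
  unfold memSquare; infer_instance

def IsCanonicalSquares (W d : ℕ) (Qs : Finset SquareSpec) : Prop :=
  ∃ I₁ I₂ : Finset (Finset ℕ),
    IsCanonicalIntervals W d I₁ ∧ IsCanonicalIntervals W d I₂ ∧ Qs = I₁ ×ˢ I₂

/-- The number of sources of `M` lying on the shadow of the square `Q` with respect to `M`,
i.e. on the shortest sub-path of the top row containing all sources of pairs of `M` whose
destination lies in `Q`. -/
def shadowCount (M : Finset DPair) (Q : SquareSpec) : ℕ :=
  (M.filter (fun m => ∃ m₁ ∈ M, memSquare m₁.2 Q ∧ ∃ m₂ ∈ M, memSquare m₂.2 Q ∧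
      m₁.1.2 ≤ m.1.2 ∧ m.1.2 ≤ m₂.1.2)).card

/-- The square `Q` (of side `d`) has the β-shadow property with respect to `M`. -/
def HasShadowProp (β : ℝ) (d : ℕ) (M : Finset DPair) (Q : SquareSpec) : Prop :=
  (shadowCount M Q : ℝ) ≤ β * d

/-- Optimal value of the node-disjoint paths problem. -/
noncomputable def OPTn {V : Type*} (G : SimpleGraph V) (M : Finset (V × V)) : ℕ :=
  sSup {k | ∃ M' ⊆ M, M'.card = k ∧ NodeDisjointRoutable G M'}

def InGrid (ℓ : ℕ) (v : Vtx) : Prop := 1 ≤ v.1 ∧ v.1 ≤ ℓ ∧ 1 ≤ v.2 ∧ v.2 ≤ ℓ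

/-! Send every terminal `v` to its nearest boundary vertex `tilde v` along a straight tail of at
most `D` edges. Two tails can only meet if they end in the same boundary vertex: a vertex of the
tail of `v` other than `v` has `tilde v` as its *only* nearest boundary vertex, because the tails
from `v` towards different sides of the grid leave `v` in different directions.

For a routed pair `(s, t)` let `B (s, t)` be the union of the crosses of radius `D` around `tilde s`
and `tilde t`. It has `O(D)` vertices and contains the tails of `s` and `t`, as well as every
terminal sent to `tilde s` or `tilde t`. The paths of an optimal solution being disjoint, `O(D)` of
them hit `B (s, t)`. Relations of bounded out-degree have large independent sets, so a fraction
`Ω(1 / D)` of the pairs can be kept such that no kept path hits the set `B` of another kept pair,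
and then the kept paths, prolonged by their tails, are pairwise disjoint. -/

/-! ### Independent sets in relations of bounded out-degree -/

section Independent

variable {α : Type*} (R : α → α → Prop) [DecidableRel R] {Δ : ℕ} {S : Finset α}

lemma exists_card_filter_rel_left_le (hS : S.Nonempty) (hΔ : ∀ a ∈ S, #{b ∈ S | R a b} ≤ Δ) :
    ∃ b ∈ S, #{a ∈ S | R a b} ≤ Δ := by
  refine exists_le_of_sum_le hS ?_
  calc ∑ b ∈ S, #{a ∈ S | R a b}
      = ∑ a ∈ S, #{b ∈ S | R a b} := (sum_card_bipartiteAbove_eq_sum_card_bipartiteBelow R).symm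
    _ ≤ ∑ _a ∈ S, Δ := sum_le_sum hΔ

/-- Keep an element of in-degree at most `Δ`, discard its at most `2 * Δ` neighbours, recurse. -/
lemma exists_subset_pairwise_not_rel (hΔ : ∀ a ∈ S, #{b ∈ S | R a b} ≤ Δ) :
    ∃ T ⊆ S, (T : Set α).Pairwise (fun a b ↦ ¬ R a b) ∧ #S ≤ (2 * Δ + 1) * #T := by
  classical
  induction S using Finset.strongInduction with
  | H S ih =>
  rcases S.eq_empty_or_nonempty with rfl | hne
  · exact ⟨∅, by simp⟩
  obtain ⟨v, hvS, hin⟩ := exists_card_filter_rel_left_le R hne hΔ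
  set N : Finset α := insert v ({b ∈ S | R v b} ∪ {a ∈ S | R a v}) with hN
  have hNcard : #N ≤ 2 * Δ + 1 := by
    calc #N ≤ #({b ∈ S | R v b} ∪ {a ∈ S | R a v}) + 1 := card_insert_le _ _
      _ ≤ #{b ∈ S | R v b} + #{a ∈ S | R a v} + 1 := Nat.add_le_add_right (card_union_le _ _) 1
      _ ≤ Δ + Δ + 1 := Nat.add_le_add_right (Nat.add_le_add (hΔ v hvS) hin) 1
      _ = 2 * Δ + 1 := by ring
  have hvN : v ∈ N := mem_insert_self _ _
  obtain ⟨T, hTS, hT, hTcard⟩ := ih (S \ N)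
    (sdiff_subset.ssubset_of_mem_notMem hvS fun h ↦ (mem_sdiff.1 h).2 hvN)
    fun a ha ↦ (card_le_card (filter_subset_filter _ sdiff_subset)).trans
      (hΔ a (mem_sdiff.1 ha).1)
  have hvT : v ∉ T := fun h ↦ (mem_sdiff.1 (hTS h)).2 hvN
  refine ⟨insert v T, insert_subset hvS (hTS.trans sdiff_subset), ?_, ?_⟩
  · rw [coe_insert, Set.pairwise_insert]
    refine ⟨hT, fun b hb _ ↦ ?_⟩
    obtain ⟨hbS, hbN⟩ := mem_sdiff.1 (hTS hb)
    simp only [hN, mem_insert, mem_union, mem_filter, hbS, true_and] at hbN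
    tauto
  · calc #S ≤ #(S \ N) + #N := card_le_card_sdiff_add_card
      _ ≤ (2 * Δ + 1) * #T + (2 * Δ + 1) := Nat.add_le_add hTcard hNcard
      _ = (2 * Δ + 1) * #(insert v T) := by rw [card_insert_of_notMem hvT, mul_add_one]

end Independent

lemma exists_subset_pairwise_disjoint {ι V : Type*} {M : Finset ι} {U : ι → Set V}
    {B : ι → Finset V} {k : ℕ} (hU : (M : Set ι).PairwiseDisjoint U)
    (hB : ∀ i ∈ M, #(B i) ≤ k) :
    ∃ T ⊆ M, (T : Set ι).Pairwise (fun i j ↦ Disjoint (B i : Set V) (U j)) ∧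
      #M ≤ (2 * k + 1) * #T := by
  classical
  obtain ⟨T, hTM, hT, hcard⟩ := exists_subset_pairwise_not_rel
    (fun i j ↦ ¬ Disjoint (B i : Set V) (U j)) (S := M) (Δ := k) fun i hi ↦ by
      refine (card_le_card_of_forall_subsingleton (fun j x ↦ x ∈ U j) ?_ ?_).trans (hB i hi)
      · intro j hj
        obtain ⟨x, hxB, hxU⟩ := Set.not_disjoint_iff.1 (mem_filter.1 hj).2
        exact ⟨x, hxB, hxU⟩
      · rintro x - j ⟨hj, hxj⟩ j' ⟨hj', hxj'⟩
        exact hU.elim_set (mem_filter.1 hj).1 (mem_filter.1 hj').1 x hxj hxj'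
  exact ⟨T, hTM, hT.imp fun _ _ ↦ not_not.1, hcard⟩

/-! ### Routings in arbitrary graphs -/

section Routing

variable {V : Type*} {G : SimpleGraph V}

/-- Two vertices are joined in a set `U` of vertices if some walk of `G` between them stays in `U`;
the walk need not be a path. -/
def WalkJoinedIn (G : SimpleGraph V) (U : Set V) (u v : V) : Prop :=
  ∃ p : G.Walk u v, ∀ x ∈ p.support, x ∈ U

namespace WalkJoinedIn

variable {U U' : Set V} {u v w : V}

lemma left_mem (h : WalkJoinedIn G U u v) : u ∈ U :=
  let ⟨p, hp⟩ := h
  hp u p.start_mem_support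

lemma right_mem (h : WalkJoinedIn G U u v) : v ∈ U :=
  let ⟨p, hp⟩ := h
  hp v p.end_mem_support

lemma symm (h : WalkJoinedIn G U u v) : WalkJoinedIn G U v u :=
  let ⟨p, hp⟩ := h
  ⟨p.reverse, by simpa using hp⟩

lemma trans_union (h : WalkJoinedIn G U u v) (h' : WalkJoinedIn G U' v w) :
    WalkJoinedIn G (U ∪ U') u w := by
  obtain ⟨p, hp⟩ := h
  obtain ⟨q, hq⟩ := h'
  exact ⟨p.append q, fun x hx ↦
    ((SimpleGraph.Walk.mem_support_append_iff p q).1 hx).imp (hp x) (hq x)⟩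

lemma exists_isPath (h : WalkJoinedIn G U u v) :
    ∃ p : G.Walk u v, p.IsPath ∧ ∀ x ∈ p.support, x ∈ U := by
  classical
  obtain ⟨p, hp⟩ := h
  exact ⟨p.bypass, p.bypass_isPath, fun x hx ↦ hp x (p.support_bypass_subset_support hx)⟩

end WalkJoinedIn

lemma NodeDisjointRoutable.exists_pairwiseDisjoint {M : Finset (V × V)}
    (h : NodeDisjointRoutable G M) :
    ∃ U : V × V → Set V, (M : Set (V × V)).PairwiseDisjoint U ∧
      ∀ m ∈ M, WalkJoinedIn G (U m) m.1 m.2 := by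
  obtain ⟨P, -, hP⟩ := h
  refine ⟨fun m ↦ {x | ∃ hm : m ∈ M, x ∈ (P ⟨m, hm⟩).support}, ?_,
    fun m hm ↦ ⟨P ⟨m, hm⟩, fun x hx ↦ ⟨hm, hx⟩⟩⟩
  refine fun m _ m' _ hne ↦ Set.disjoint_left.2 ?_
  rintro x ⟨hm, hx⟩ ⟨hm', hx'⟩
  exact hP ⟨m, hm⟩ ⟨m', hm'⟩ (Subtype.coe_ne_coe.1 hne) x hx hx'

lemma nodeDisjointRoutable_image [DecidableEq V] {ι : Type*} {T : Finset ι} {f : ι → V × V}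
    {U : ι → Set V} (hU : (T : Set ι).PairwiseDisjoint U)
    (hjoin : ∀ i ∈ T, WalkJoinedIn G (U i) (f i).1 (f i).2) :
    NodeDisjointRoutable G (T.image f) := by
  have hpath : ∀ q : {q // q ∈ T.image f}, ∃ i ∈ T, f i = q.1 ∧
      ∃ p : G.Walk q.1.1 q.1.2, p.IsPath ∧ ∀ x ∈ p.support, x ∈ U i := by
    rintro ⟨q, hq⟩
    obtain ⟨i, hi, rfl⟩ := mem_image.1 hq
    exact ⟨i, hi, rfl, (hjoin i hi).exists_isPath⟩
  choose i hiT hi P hP hPU using hpath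
  refine ⟨P, hP, fun q q' hne x hx hx' ↦ hne (Subtype.ext ?_)⟩
  have hii' := hU.elim_set (hiT q) (hiT q') x (hPU q x hx) (hPU q' x hx')
  rw [← hi q, ← hi q', hii']

lemma injOn_of_pairwiseDisjoint_walkJoinedIn {ι : Type*} {T : Set ι} {f : ι → V × V}
    {U : ι → Set V} (hU : T.PairwiseDisjoint U)
    (hjoin : ∀ i ∈ T, WalkJoinedIn G (U i) (f i).1 (f i).2) : T.InjOn f :=
  fun i hi j hj hij ↦ hU.elim_set hi hj (f i).1 (hjoin i hi).left_mem
    (hij ▸ (hjoin j hj).left_mem)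

lemma bddAbove_card_nodeDisjointRoutable (G : SimpleGraph V) (M : Finset (V × V)) :
    BddAbove {k | ∃ M' ⊆ M, #M' = k ∧ NodeDisjointRoutable G M'} := by
  refine ⟨#M, ?_⟩
  rintro k ⟨M', hM', rfl, -⟩
  exact card_le_card hM'

lemma exists_nodeDisjointRoutable_card_eq_OPTn (G : SimpleGraph V) (M : Finset (V × V)) :
    ∃ M' ⊆ M, #M' = OPTn G M ∧ NodeDisjointRoutable G M' :=
  Nat.sSup_mem (s := {k | ∃ M' ⊆ M, #M' = k ∧ NodeDisjointRoutable G M'})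
    ⟨0, ∅, empty_subset M, rfl, by simp [NodeDisjointRoutable]⟩
    (bddAbove_card_nodeDisjointRoutable G M)

lemma NodeDisjointRoutable.card_le_OPTn {M M' : Finset (V × V)} (h : NodeDisjointRoutable G M')
    (hM' : M' ⊆ M) : #M' ≤ OPTn G M :=
  le_csSup (bddAbove_card_nodeDisjointRoutable G M) ⟨M', hM', rfl, h⟩

/-- The vertices that are a source or a destination of some demand pair in `M`. -/
def terminals (M : Finset (V × V)) : Set V :=
  {v | (∃ p ∈ M, p.1 = v) ∨ ∃ p ∈ M, p.2 = v}

lemma fst_mem_terminals {M : Finset (V × V)} {m : V × V} (hm : m ∈ M) : m.1 ∈ terminals M :=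
  .inl ⟨m, hm, rfl⟩

lemma snd_mem_terminals {M : Finset (V × V)} {m : V × V} (hm : m ∈ M) : m.2 ∈ terminals M :=
  .inr ⟨m, hm, rfl⟩

lemma forall_mem_terminals {M : Finset (V × V)} {P : V → Prop}
    (h₁ : ∀ m ∈ M, P m.1) (h₂ : ∀ m ∈ M, P m.2) : ∀ v ∈ terminals M, P v := by
  rintro v (⟨m, hm, rfl⟩ | ⟨m, hm, rfl⟩)
  exacts [h₁ m hm, h₂ m hm]

/-- A system of tails for the vertices in `A` along a map `ρ` of the vertices: `S v` contains a
walk from `v` to `ρ v`, and it meets `S w` only if `ρ v = ρ w`. -/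
structure IsTailSystem (G : SimpleGraph V) (A : Set V) (ρ : V → V) (S : V → Set V) : Prop where
  walkJoinedIn : ∀ v ∈ A, WalkJoinedIn G (S v) v (ρ v)
  eq_of_mem : ∀ v ∈ A, ∀ w ∈ A, ∀ x ∈ S v, x ∈ S w → ρ v = ρ w

lemma IsTailSystem.walkJoinedIn_union {A : Set V} {ρ : V → V} {S : V → Set V}
    (hS : IsTailSystem G A ρ S) {U : Set V} {u v : V} (hu : u ∈ A) (hv : v ∈ A)
    (hU : WalkJoinedIn G U u v) : WalkJoinedIn G (S u ∪ U ∪ S v) (ρ u) (ρ v) :=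
  ((hS.walkJoinedIn u hu).symm.trans_union hU).trans_union (hS.walkJoinedIn v hv)

lemma IsTailSystem.disjoint_prolongations {A : Set V} {ρ : V → V} {S N : V → Set V}
    (hS : IsTailSystem G A ρ S) (hSN : ∀ v ∈ A, S v ⊆ N (ρ v)) {U U' : Set V} {u v u' v' : V}
    (hu : u ∈ A) (hv : v ∈ A) (hu' : u' ∈ A) (hv' : v' ∈ A)
    (hU' : WalkJoinedIn G U' u' v') (hUU' : Disjoint U U')
    (hN : Disjoint (N (ρ u) ∪ N (ρ v)) U') (hN' : Disjoint (N (ρ u') ∪ N (ρ v')) U) :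
    Disjoint (S u ∪ U ∪ S v) (S u' ∪ U' ∪ S v') := by
  rw [Set.disjoint_union_left] at hN hN'
  have tail_tail : ∀ a ∈ A, ∀ b ∈ A, Disjoint (N (ρ a)) U' → b ∈ U' → Disjoint (S a) (S b) := by
    refine fun a ha b hb hNa hbU' ↦ Set.disjoint_left.2 fun x hxa hxb ↦ ?_
    have hbN : b ∈ N (ρ a) :=
      hS.eq_of_mem a ha b hb x hxa hxb ▸ hSN b hb (hS.walkJoinedIn b hb).left_mem
    exact Set.disjoint_left.1 hNa hbN hbU'
  have tail : ∀ a ∈ A, Disjoint (N (ρ a)) U' → Disjoint (S a) (S u' ∪ U' ∪ S v') :=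
    fun a ha hNa ↦ Set.disjoint_union_right.2 ⟨Set.disjoint_union_right.2
      ⟨tail_tail a ha u' hu' hNa hU'.left_mem, hNa.mono_left (hSN a ha)⟩,
      tail_tail a ha v' hv' hNa hU'.right_mem⟩
  have middle : Disjoint U (S u' ∪ U' ∪ S v') :=
    Set.disjoint_union_right.2 ⟨Set.disjoint_union_right.2
      ⟨(hN'.1.mono_left (hSN u' hu')).symm, hUU'⟩, (hN'.2.mono_left (hSN v' hv')).symm⟩
  exact Set.disjoint_union_left.2
    ⟨Set.disjoint_union_left.2 ⟨tail u hu hN.1, middle⟩, tail v hv hN.2⟩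

theorem IsTailSystem.OPTn_le_mul_OPTn_image [DecidableEq V] {M : Finset (V × V)} {ρ : V → V}
    {S : V → Set V} (hS : IsTailSystem G (terminals M) ρ S) {N : V → Finset V} {k : ℕ}
    (hSN : ∀ v ∈ terminals M, S v ⊆ N (ρ v)) (hN : ∀ u, #(N u) ≤ k) :
    OPTn G M ≤ (4 * k + 1) * OPTn G (M.image (Prod.map ρ ρ)) := by
  obtain ⟨M', hM', hcard, hroute⟩ := exists_nodeDisjointRoutable_card_eq_OPTn G M
  obtain ⟨U, hUdisj, hU⟩ := hroute.exists_pairwiseDisjoint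
  let B : V × V → Finset V := fun m ↦ N (ρ m.1) ∪ N (ρ m.2)
  have hB : ∀ m ∈ M', #(B m) ≤ 2 * k := fun m _ ↦
    calc #(B m) ≤ #(N (ρ m.1)) + #(N (ρ m.2)) := card_union_le _ _
      _ ≤ k + k := Nat.add_le_add (hN _) (hN _)
      _ = 2 * k := (two_mul k).symm
  obtain ⟨T, hTM', hTB, hTcard⟩ := exists_subset_pairwise_disjoint hUdisj hB
  have hfst : ∀ m ∈ T, m.1 ∈ terminals M := fun m hm ↦ fst_mem_terminals (hM' (hTM' hm))
  have hsnd : ∀ m ∈ T, m.2 ∈ terminals M := fun m hm ↦ snd_mem_terminals (hM' (hTM' hm))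
  let U' : V × V → Set V := fun m ↦ S m.1 ∪ U m ∪ S m.2
  have hU'join : ∀ m ∈ T, WalkJoinedIn G (U' m) (ρ m.1) (ρ m.2) := fun m hm ↦
    hS.walkJoinedIn_union (hfst m hm) (hsnd m hm) (hU m (hTM' hm))
  have hU'disj : (T : Set (V × V)).PairwiseDisjoint U' := fun m hm m' hm' hne ↦
    hS.disjoint_prolongations (N := fun u ↦ N u) hSN (hfst m hm) (hsnd m hm) (hfst m' hm')
      (hsnd m' hm') (hU m' (hTM' hm')) (hUdisj (hTM' hm) (hTM' hm') hne)
      (by simpa only [B, coe_union] using hTB hm hm' hne)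
      (by simpa only [B, coe_union] using hTB hm' hm hne.symm)
  calc OPTn G M = #M' := hcard.symm
    _ ≤ (2 * (2 * k) + 1) * #T := hTcard
    _ = (4 * k + 1) * #(T.image (Prod.map ρ ρ)) := by
      rw [card_image_of_injOn (injOn_of_pairwiseDisjoint_walkJoinedIn hU'disj hU'join)]
      ring
    _ ≤ (4 * k + 1) * OPTn G (M.image (Prod.map ρ ρ)) :=
      Nat.mul_le_mul_left _ ((nodeDisjointRoutable_image hU'disj hU'join).card_le_OPTn
        (image_subset_image (hTM'.trans hM')))

end Routing

/-! ### Distances in the grid -/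

/-- The `ℓ¹` distance on `ℕ × ℕ`, which is the graph distance of the grid. -/
def l1Dist (u v : Vtx) : ℕ := Nat.dist u.1 v.1 + Nat.dist u.2 v.2

lemma l1Dist_triangle (u v w : Vtx) : l1Dist u w ≤ l1Dist u v + l1Dist v w := by
  have h₁ := Nat.dist.triangle_inequality u.1 v.1 w.1
  have h₂ := Nat.dist.triangle_inequality u.2 v.2 w.2
  simp only [l1Dist]
  omega

lemma l1Dist_eq_zero {u v : Vtx} : l1Dist u v = 0 ↔ u = v := by
  simp only [l1Dist, Nat.dist, Prod.ext_iff]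
  omega

lemma mem_uIcc_vtx {u v x : Vtx} :
    x ∈ Set.uIcc u v ↔
      min u.1 v.1 ≤ x.1 ∧ x.1 ≤ max u.1 v.1 ∧ min u.2 v.2 ≤ x.2 ∧ x.2 ≤ max u.2 v.2 := by
  simp only [Set.uIcc, Set.mem_Icc, Prod.le_def, Prod.fst_inf, Prod.snd_inf, Prod.fst_sup,
    Prod.snd_sup]
  tauto

lemma mem_uIcc_iff_l1Dist_add {u v x : Vtx} :
    x ∈ Set.uIcc u v ↔ l1Dist u x + l1Dist x v = l1Dist u v := by
  simp only [mem_uIcc_vtx, l1Dist, Nat.dist]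
  omega

lemma gridG_adj {ℓ : ℕ} {u v : Vtx} :
    (gridG ℓ).Adj u v ↔ InGrid ℓ u ∧ InGrid ℓ v ∧ l1Dist u v = 1 := by
  simp only [gridG, rectGrid, SimpleGraph.fromRel_adj, InGrid, l1Dist, Nat.dist, ne_eq,
    Prod.ext_iff]
  omega

lemma exists_gridG_adj_l1Dist_add_one_eq {ℓ : ℕ} {u v : Vtx} (hu : InGrid ℓ u) (hv : InGrid ℓ v)
    (huv : u ≠ v) : ∃ w, (gridG ℓ).Adj u w ∧ l1Dist w v + 1 = l1Dist u v := by
  obtain ⟨a, b⟩ := u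
  obtain ⟨a', b'⟩ := v
  simp only [InGrid, ne_eq, Prod.mk.injEq] at hu hv huv
  simp only [gridG_adj, InGrid, l1Dist, Nat.dist]
  rcases lt_trichotomy a a' with h | h | h
  · exact ⟨(a + 1, b), by omega⟩
  · rcases lt_or_gt_of_ne fun h' ↦ huv ⟨h, h'⟩ with h' | h'
    · exact ⟨(a, b + 1), by omega⟩
    · exact ⟨(a, b - 1), by omega⟩
  · exact ⟨(a - 1, b), by omega⟩

lemma exists_walk_length_eq_l1Dist {ℓ : ℕ} {u v : Vtx} (hu : InGrid ℓ u) (hv : InGrid ℓ v) :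
    ∃ p : (gridG ℓ).Walk u v, p.length = l1Dist u v := by
  induction hn : l1Dist u v generalizing u with
  | zero =>
    obtain rfl := l1Dist_eq_zero.1 hn
    exact ⟨.nil, rfl⟩
  | succ n ih =>
    have huv : u ≠ v := fun h ↦ by simp [l1Dist_eq_zero.2 h] at hn
    obtain ⟨w, hadj, hwv⟩ := exists_gridG_adj_l1Dist_add_one_eq hu hv huv
    obtain ⟨p, hp⟩ := ih (gridG_adj.1 hadj).2.1 (by omega)
    exact ⟨.cons hadj p, by rw [SimpleGraph.Walk.length_cons, hp]⟩

lemma l1Dist_le_length {ℓ : ℕ} {u v : Vtx} (p : (gridG ℓ).Walk u v) : l1Dist u v ≤ p.length := by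
  induction p with
  | nil => exact (l1Dist_eq_zero.2 rfl).le
  | @cons u w v hadj p ih =>
    have htri := l1Dist_triangle u w v
    have hadj := (gridG_adj.1 hadj).2.2
    rw [SimpleGraph.Walk.length_cons]
    omega

lemma gridG_dist {ℓ : ℕ} {u v : Vtx} (hu : InGrid ℓ u) (hv : InGrid ℓ v) :
    (gridG ℓ).dist u v = l1Dist u v := by
  obtain ⟨p, hp⟩ := exists_walk_length_eq_l1Dist hu hv
  obtain ⟨q, hq⟩ := p.reachable.exists_walk_length_eq_dist
  exact le_antisymm (hp ▸ SimpleGraph.dist_le p) (hq ▸ l1Dist_le_length q)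

lemma walkJoinedIn_gridG_uIcc {ℓ : ℕ} {u v : Vtx} (hu : InGrid ℓ u) (hv : InGrid ℓ v) :
    WalkJoinedIn (gridG ℓ) (Set.uIcc u v) u v := by
  obtain ⟨p, hp⟩ := exists_walk_length_eq_l1Dist hu hv
  refine ⟨p, fun x hx ↦ mem_uIcc_iff_l1Dist_add.2 ?_⟩
  obtain ⟨q, r, rfl⟩ := SimpleGraph.Walk.mem_support_iff_exists_append.1 hx
  have hq := l1Dist_le_length q
  have hr := l1Dist_le_length r
  have htri := l1Dist_triangle u x v
  rw [SimpleGraph.Walk.length_append] at hp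
  omega

/-! ### Nearest boundary vertices -/

lemma OnBoundary.inGrid {ℓ : ℕ} {v : Vtx} (h : OnBoundary ℓ v) : InGrid ℓ v :=
  ⟨h.1, h.2.1, h.2.2.1, h.2.2.2.1⟩

/-- `u` is a boundary vertex of the `ℓ × ℓ` grid nearest to `v`. Distances are measured in
`ℓ¹`, which agrees with the graph distance inside the grid by `gridG_dist`. -/
def IsNearestBoundary (ℓ : ℕ) (v u : Vtx) : Prop :=
  OnBoundary ℓ u ∧ ∀ b, OnBoundary ℓ b → l1Dist v u ≤ l1Dist v b

lemma isNearestBoundary_of_dist {ℓ : ℕ} {v u : Vtx} (hv : InGrid ℓ v) (hu : OnBoundary ℓ u)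
    (hmin : ∀ b, OnBoundary ℓ b → (gridG ℓ).dist v u ≤ (gridG ℓ).dist v b) :
    IsNearestBoundary ℓ v u := by
  refine ⟨hu, fun b hb ↦ ?_⟩
  rw [← gridG_dist hv hu.inGrid, ← gridG_dist hv hb.inGrid]
  exact hmin b hb

namespace IsNearestBoundary

variable {ℓ : ℕ} {v w u z x : Vtx}

lemma l1Dist_eq (hu : IsNearestBoundary ℓ v u) (hz : IsNearestBoundary ℓ v z) :
    l1Dist v u = l1Dist v z :=
  le_antisymm (hu.2 z hz.1) (hz.2 u hu.1)

/-- Otherwise projecting `v` to the side that contains `u` would give a nearer boundary vertex. -/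
lemma eq_projection (hv : InGrid ℓ v) (hu : IsNearestBoundary ℓ v u) :
    u = (1, v.2) ∨ u = (ℓ, v.2) ∨ u = (v.1, 1) ∨ u = (v.1, ℓ) := by
  obtain ⟨⟨-, -, -, -, hside⟩, hmin⟩ := hu
  simp only [OnBoundary, l1Dist, Nat.dist] at hmin
  simp only [InGrid] at hv
  simp only [Prod.ext_iff]
  rcases hside with h | h | h | h
  · have := hmin (1, v.2) (by simp; omega)
    omega
  · have := hmin (ℓ, v.2) (by simp; omega)
    omega
  · have := hmin (v.1, 1) (by simp; omega)
    omega
  · have := hmin (v.1, ℓ) (by simp; omega)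
    omega

lemma of_mem_uIcc (hu : IsNearestBoundary ℓ v u) (hx : x ∈ Set.uIcc v u) :
    IsNearestBoundary ℓ x u := by
  refine ⟨hu.1, fun b hb ↦ ?_⟩
  have hmin := hu.2 b hb
  have htri := l1Dist_triangle v x b
  have hadd := mem_uIcc_iff_l1Dist_add.1 hx
  omega

/-- The segments from `v` to its projections on the four sides leave `v` in four directions. -/
lemma eq_of_mem_uIcc_of_mem_uIcc (hv : InGrid ℓ v) (hu : IsNearestBoundary ℓ v u)
    (hz : IsNearestBoundary ℓ v z) (hxu : x ∈ Set.uIcc v u) (hxz : x ∈ Set.uIcc v z)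
    (hxv : x ≠ v) : u = z := by
  simp only [InGrid] at hv
  simp only [mem_uIcc_vtx, ne_eq, Prod.ext_iff] at hxu hxz hxv ⊢
  rcases hu.eq_projection hv with rfl | rfl | rfl | rfl <;>
    rcases hz.eq_projection hv with rfl | rfl | rfl | rfl <;> dsimp only at * <;> omega

lemma eq_of_mem_uIcc_of_ne (hv : InGrid ℓ v) (hu : IsNearestBoundary ℓ v u)
    (hx : x ∈ Set.uIcc v u) (hxv : x ≠ v) (hz : IsNearestBoundary ℓ x z) : u = z := by
  have hadd := mem_uIcc_iff_l1Dist_add.1 hx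
  have heq := (hu.of_mem_uIcc hx).l1Dist_eq hz
  have htri := l1Dist_triangle v x z
  have hle := hu.2 z hz.1
  have hvz : IsNearestBoundary ℓ v z := ⟨hz.1, fun b hb ↦ by have := hu.2 b hb; omega⟩
  have hxz : x ∈ Set.uIcc v z := mem_uIcc_iff_l1Dist_add.2 (by omega)
  exact hu.eq_of_mem_uIcc_of_mem_uIcc hv hvz hx hxz hxv

lemma eq_or_eq_of_mem_uIcc (hv : InGrid ℓ v) (hw : InGrid ℓ w) (hu : IsNearestBoundary ℓ v u)
    (hz : IsNearestBoundary ℓ w z) (hxu : x ∈ Set.uIcc v u) (hxz : x ∈ Set.uIcc w z) :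
    v = w ∨ u = z := by
  by_cases hxv : x = v
  · by_cases hxw : x = w
    · exact .inl (hxv.symm.trans hxw)
    · exact .inr (hz.eq_of_mem_uIcc_of_ne hw hxz hxw (hu.of_mem_uIcc hxu)).symm
  · exact .inr (hu.eq_of_mem_uIcc_of_ne hv hxu hxv (hz.of_mem_uIcc hxz))

end IsNearestBoundary

lemma isTailSystem_uIcc {ℓ : ℕ} {A : Set Vtx} {ρ : Vtx → Vtx} (hA : ∀ v ∈ A, InGrid ℓ v)
    (hρ : ∀ v ∈ A, IsNearestBoundary ℓ v (ρ v)) :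
    IsTailSystem (gridG ℓ) A ρ (fun v ↦ Set.uIcc v (ρ v)) where
  walkJoinedIn v hv := walkJoinedIn_gridG_uIcc (hA v hv) (hρ v hv).1.inGrid
  eq_of_mem v hv w hw _ hxv hxw :=
    ((hρ v hv).eq_or_eq_of_mem_uIcc (hA v hv) (hA w hw) (hρ w hw) hxv hxw).elim (congrArg ρ) id

/-- The vertices at distance at most `D` from `u` in the row or the column of `u`. Near the axes
the truncated difference `u.1 - D` only cuts off points outside `ℕ × ℕ`. -/
def cross (D : ℕ) (u : Vtx) : Finset Vtx :=
  Icc (u.1 - D) (u.1 + D) ×ˢ {u.2} ∪ {u.1} ×ˢ Icc (u.2 - D) (u.2 + D)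

lemma card_cross_le (D : ℕ) (u : Vtx) : #(cross D u) ≤ 4 * D + 2 := by
  refine (card_union_le _ _).trans ?_
  simp only [card_product, card_singleton, Nat.card_Icc]
  omega

lemma IsNearestBoundary.uIcc_subset_cross {ℓ D : ℕ} {v u : Vtx} (hv : InGrid ℓ v)
    (hu : IsNearestBoundary ℓ v u) (hD : l1Dist v u ≤ D) :
    Set.uIcc v u ⊆ cross D u := by
  intro x hx
  simp only [mem_uIcc_vtx] at hx
  simp only [l1Dist, Nat.dist] at hD
  simp only [cross, coe_union, coe_product, coe_Icc, coe_singleton, Set.mem_union, Set.mem_prod,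
    Set.mem_Icc, Set.mem_singleton_iff]
  rcases hu.eq_projection hv with rfl | rfl | rfl | rfl <;> dsimp only at * <;> omega

theorem OPTn_gridG_le_mul_OPTn_image {ℓ D : ℕ} {M : Finset DPair} {ρ : Vtx → Vtx}
    (hM : ∀ v ∈ terminals M, InGrid ℓ v) (hρ : ∀ v ∈ terminals M, IsNearestBoundary ℓ v (ρ v))
    (hD : ∀ v ∈ terminals M, l1Dist v (ρ v) ≤ D) :
    OPTn (gridG ℓ) M ≤ (16 * D + 9) * OPTn (gridG ℓ) (M.image (Prod.map ρ ρ)) := by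
  have h := (isTailSystem_uIcc hM hρ).OPTn_le_mul_OPTn_image
    (fun v hv ↦ (hρ v hv).uIcc_subset_cross (hM v hv) (hD v hv)) (card_cross_le D)
  rwa [show 4 * (4 * D + 2) + 1 = 16 * D + 9 by ring] at h

theorem statement15_general {ℓ δ d : ℕ} (hd : 1 ≤ d) {M : Finset DPair}
    (hM : ∀ p ∈ M, InGrid ℓ p.1 ∧ InGrid ℓ p.2) {tilde : Vtx → Vtx}
    (htilde : ∀ v ∈ terminals M, OnBoundary ℓ (tilde v) ∧
      ∀ b, OnBoundary ℓ b → (gridG ℓ).dist v (tilde v) ≤ (gridG ℓ).dist v b)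
    (hs : ∀ p ∈ M, (gridG ℓ).dist p.1 (tilde p.1) ≤ δ)
    (ht : ∀ p ∈ M, (gridG ℓ).dist p.2 (tilde p.2) < 2 * d) :
    1 / 41 * (OPTn (gridG ℓ) M : ℝ) / ((d : ℝ) + (δ : ℝ)) ≤
      OPTn (gridG ℓ) (M.image (Prod.map tilde tilde)) := by
  have hgrid : ∀ v ∈ terminals M, InGrid ℓ v :=
    forall_mem_terminals (fun p hp ↦ (hM p hp).1) (fun p hp ↦ (hM p hp).2)
  have hdist : ∀ v ∈ terminals M, (gridG ℓ).dist v (tilde v) ≤ δ + 2 * d :=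
    forall_mem_terminals (fun p hp ↦ (hs p hp).trans le_self_add)
      (fun p hp ↦ (ht p hp).le.trans le_add_self)
  have hle := OPTn_gridG_le_mul_OPTn_image hgrid
    (fun v hv ↦ isNearestBoundary_of_dist (hgrid v hv) (htilde v hv).1 (htilde v hv).2)
    (fun v hv ↦ (gridG_dist (hgrid v hv) (htilde v hv).1.inGrid).symm.trans_le (hdist v hv))
  have hle' : (OPTn (gridG ℓ) M : ℝ) ≤
      41 * (d + δ) * OPTn (gridG ℓ) (M.image (Prod.map tilde tilde)) := by
    exact_mod_cast hle.trans (Nat.mul_le_mul_right _ (by omega))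
  have hpos : (0 : ℝ) < d + δ := by positivity
  rw [div_le_iff₀ hpos]
  linarith

/-- Claim: relocating both sources (at distance ≤ δ from the boundary)
and destinations (at distance < 2d from the boundary) onto the boundary loses at most a
`(d+δ)` factor, up to a universal constant. -/
theorem statement15 :
    ∃ c : ℝ, 0 < c ∧ ∀ ℓ δ d : ℕ, 2 ≤ ℓ → 1 ≤ δ → 1 ≤ d →
      ∀ M : Finset DPair,
        (∀ p ∈ M, InGrid ℓ p.1 ∧ InGrid ℓ p.2) →
        DistinctSources M → DistinctDests M →
        ∀ tilde : Vtx → Vtx,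
          (∀ v : Vtx, ((∃ p ∈ M, p.1 = v) ∨ (∃ p ∈ M, p.2 = v)) →
            OnBoundary ℓ (tilde v) ∧
            ∀ b : Vtx, OnBoundary ℓ b →
              (gridG ℓ).dist v (tilde v) ≤ (gridG ℓ).dist v b) →
          (∀ p ∈ M, (gridG ℓ).dist p.1 (tilde p.1) ≤ δ) →
          (∀ p ∈ M, (gridG ℓ).dist p.2 (tilde p.2) < 2 * d) →
          c * (OPTn (gridG ℓ) M : ℝ) / ((d : ℝ) + (δ : ℝ)) ≤
            (OPTn (gridG ℓ) (M.image (fun p => (tilde p.1, tilde p.2))) : ℝ) :=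
  ⟨1 / 41, by norm_num, fun _ _ _ _ _ hd _ hM _ _ _ ↦ statement15_general hd hM⟩
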